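/- arXiv:1606.00770 — 2 statements merged into one kernel-verified Lean document; each statement's English description precedes it below -/
import Mathlib

section
/- Let f(x) = x_1 x_3 + x_2 x_4 where (x_1,x_2,x_3,x_4) is jointly normal with mean (0,0,μ_3,μ_4) and covariance matrix block-diagonal with blocks [[σ_1^2, σ_{12}],[σ_{12}, σ_2^2]] and [[σ_3^2, σ_{34}],[σ_{34}, σ_4^2]]. Then Var(f) = σ_1^2(σ_3^2+μ_3^2) + σ_2^2(σ_4^2+μ_4^2) + 2σ_{12}(σ_{34}+μ_3μ_4), and the main effect indices of x_3 and x_4 are zero: Var(E[f|x_3]) = Var(E[f|x_4]) = 0. -/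
open MeasureTheory ProbabilityTheory

section LinearCombinations

variable {Ω ι : Type*} [MeasurableSpace Ω] {P : Measure Ω} [Fintype ι]
  {X : ι → Ω → ℝ} {m : ι → ℝ} {C : Matrix ι ι ℝ}

/-- A finite family all of whose linear combinations are normal is jointly Gaussian. -/
lemma hasGaussianLaw_of_map_sum_eq_gaussianReal (hX : ∀ i, Measurable (X i))
    (h : ∀ c : ι → ℝ, ∃ a v, P.map (fun ω => ∑ i, c i * X i ω) = gaussianReal a v) :
    HasGaussianLaw (fun ω => (X · ω)) P where
  isGaussian_map := by
    classical
    refine isGaussian_of_map_eq_gaussianReal fun L => ?_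
    obtain ⟨a, v, hav⟩ := h fun i => L (Pi.single i 1)
    refine ⟨a, v, ?_⟩
    rw [Measure.map_map (by fun_prop) (measurable_pi_lambda _ hX), ← hav]
    congr 1
    ext ω
    conv_lhs => rw [Function.comp_apply, ← Finset.univ_sum_single (fun i => X i ω), map_sum]
    refine Finset.sum_congr rfl fun i _ => ?_
    have hs : (Pi.single i (X i ω) : ι → ℝ) = X i ω • Pi.single i 1 := by
      rw [← Pi.single_smul, smul_eq_mul, mul_one]
    rw [hs, map_smul, smul_eq_mul, mul_comm]

lemma integral_eq_of_map_sum_eq_gaussianReal (hX : ∀ i, Measurable (X i))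
    (h : ∀ c : ι → ℝ, P.map (fun ω => ∑ i, c i * X i ω)
      = gaussianReal (∑ i, c i * m i) (∑ i, ∑ j, c i * c j * C i j).toNNReal) (i : ι) :
    ∫ ω, X i ω ∂P = m i := by
  classical
  have hi := h (Pi.single i 1)
  simp only [Pi.single_apply, ite_mul, one_mul, zero_mul, Finset.sum_ite_eq', Finset.mem_univ,
    if_true] at hi
  calc ∫ ω, X i ω ∂P = ∫ x, x ∂(P.map (X i)) :=
        (integral_map (hX i).aemeasurable aestronglyMeasurable_id).symm
    _ = m i := by rw [hi, integral_id_gaussianReal]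

/-- The covariances are the entries of `C`, although `C` is not assumed to be positive
semidefinite and the variances are truncated at zero. -/
lemma covariance_eq_of_map_sum_eq_gaussianReal [IsProbabilityMeasure P]
    (hX : ∀ i, Measurable (X i)) (hsymm : C.IsSymm) (hdiag : ∀ i, 0 ≤ C i i)
    (h : ∀ c : ι → ℝ, P.map (fun ω => ∑ i, c i * X i ω)
      = gaussianReal (∑ i, c i * m i) (∑ i, ∑ j, c i * c j * C i j).toNNReal) (i j : ι) :
    cov[X i, X j; P] = C i j := by
  classical
  have hL2 (k : ι) : MemLp (X k) 2 P :=
    ((hasGaussianLaw_of_map_sum_eq_gaussianReal hX fun c => ⟨_, _, h c⟩).eval k).memLp_two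
  have hvar (c : ι → ℝ) :
      Var[fun ω => ∑ i, c i * X i ω; P] = max (∑ i, ∑ j, c i * c j * C i j) 0 := by
    rw [← variance_id_map (by fun_prop), h c, variance_id_gaussianReal, Real.coe_toNNReal']
  have hself (k : ι) : Var[X k; P] = C k k := by
    simpa [Pi.single_apply, hdiag k] using hvar (Pi.single k 1)
  have hji : C j i = C i j := hsymm.apply i j
  rcases le_total 0 (C i j) with hC | hC
  · have hs := hvar (Pi.single i 1 + Pi.single j 1)
    simp only [Pi.add_apply, Pi.single_apply, add_mul, mul_add, ite_mul, mul_ite, one_mul,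
      zero_mul, mul_one, mul_zero, Finset.sum_add_distrib, Finset.sum_ite_eq', Finset.mem_univ,
      if_true] at hs
    rw [variance_fun_add (hL2 i) (hL2 j), hself, hself, hji,
      max_eq_left (by linarith [hdiag i, hdiag j])] at hs
    linarith
  · have hs := hvar (Pi.single i 1 - Pi.single j 1)
    simp only [Pi.sub_apply, Pi.single_apply, sub_mul, mul_sub, ite_mul, mul_ite, one_mul,
      zero_mul, mul_one, mul_zero, Finset.sum_sub_distrib, Finset.sum_ite_eq', Finset.mem_univ,
      if_true] at hs
    rw [variance_fun_sub (hL2 i) (hL2 j), hself, hself, hji,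
      max_eq_left (by linarith [hdiag i, hdiag j])] at hs
    linarith

end LinearCombinations

/-- If `U` is centred and independent of `m₂`, then the product of `U` with an `m₂`-measurable
variable has zero conditional expectation given any sub-σ-algebra of `m₂`. -/
lemma condExp_mul_ae_eq_zero_of_indep {Ω : Type*} {m m₂ mΩ : MeasurableSpace Ω} {P : Measure Ω}
    [IsProbabilityMeasure P] {U V : Ω → ℝ} (hm : m ≤ m₂) (hm₂ : m₂ ≤ mΩ)
    (hU : Measurable U) (hUint : Integrable U P) (hV : StronglyMeasurable[m₂] V)
    (hindep : Indep (MeasurableSpace.comap U inferInstance) m₂ P) (hmean : ∫ ω, U ω ∂P = 0)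
    (hint : Integrable (U * V) P) :
    P[U * V | m] =ᵐ[P] 0 := by
  have hinner : P[U * V | m₂] =ᵐ[P] 0 := by
    have hUcond : P[U | m₂] =ᵐ[P] fun _ => ∫ ω, U ω ∂P :=
      condExp_indep_eq hU.comap_le hm₂ (comap_measurable U).stronglyMeasurable hindep
    filter_upwards [condExp_mul_of_stronglyMeasurable_right hV hint hUint, hUcond] with ω h₁ h₂
    rw [h₁, Pi.mul_apply, h₂, hmean, zero_mul, Pi.zero_apply]
  calc P[U * V | m] =ᵐ[P] P[P[U * V | m₂] | m] := (condExp_condExp_of_le hm hm₂).symm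
    _ =ᵐ[P] P[(0 : Ω → ℝ) | m] := condExp_congr_ae hinner
    _ = 0 := condExp_zero

/-- Second moment of `U₁V₁ + U₂V₂` when the pair of the `Uᵢ` is independent of that of the `Vᵢ`. -/
lemma integral_sq_mul_add_mul_of_indepFun {Ω : Type*} [MeasurableSpace Ω] {P : Measure Ω}
    {U V : Fin 2 → Ω → ℝ} (hU : ∀ i, MemLp (U i) 2 P) (hV : ∀ i, MemLp (V i) 2 P)
    (hindep : IndepFun (fun ω i => U i ω) (fun ω i => V i ω) P) :
    ∫ ω, (U 0 ω * V 0 ω + U 1 ω * V 1 ω) ^ 2 ∂P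
      = (∫ ω, U 0 ω * U 0 ω ∂P) * (∫ ω, V 0 ω * V 0 ω ∂P)
        + 2 * ((∫ ω, U 0 ω * U 1 ω ∂P) * (∫ ω, V 0 ω * V 1 ω ∂P))
        + (∫ ω, U 1 ω * U 1 ω ∂P) * (∫ ω, V 1 ω * V 1 ω ∂P) := by
  have hI (i j : Fin 2) : IndepFun (fun ω => U i ω * U j ω) (fun ω => V i ω * V j ω) P :=
    hindep.comp (φ := fun u : Fin 2 → ℝ => u i * u j) (ψ := fun v : Fin 2 → ℝ => v i * v j)
      (by fun_prop) (by fun_prop)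
  have hUU (i j : Fin 2) : Integrable (fun ω => U i ω * U j ω) P := (hU i).integrable_mul (hU j)
  have hVV (i j : Fin 2) : Integrable (fun ω => V i ω * V j ω) P := (hV i).integrable_mul (hV j)
  have hint (i j : Fin 2) : Integrable (fun ω => U i ω * U j ω * (V i ω * V j ω)) P :=
    (hI i j).integrable_mul (hUU i j) (hVV i j)
  have hmul (i j : Fin 2) : ∫ ω, U i ω * U j ω * (V i ω * V j ω) ∂P
      = (∫ ω, U i ω * U j ω ∂P) * ∫ ω, V i ω * V j ω ∂P :=
    (hI i j).integral_fun_mul_eq_mul_integral (hUU i j).aestronglyMeasurable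
      (hVV i j).aestronglyMeasurable
  rw [← hmul, ← hmul, ← hmul, ← integral_const_mul,
    ← integral_add (hint 0 0) ((hint 0 1).const_mul 2),
    ← integral_add (by exact (hint 0 0).add ((hint 0 1).const_mul 2)) (hint 1 1)]
  congr 1
  ext ω
  ring

/-- For `f(x) = x₁x₃ + x₂x₄` with `(x₁,x₂,x₃,x₄)` jointly normal of mean `(0,0,μ₃,μ₄)`
and block-diagonal covariance with blocks `[[σ₁²,σ₁₂],[σ₁₂,σ₂²]]` and
`[[σ₃²,σ₃₄],[σ₃₄,σ₄²]]` (joint normality encoded by all linear combinations being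
normal), we have
`Var(f) = σ₁²(σ₃²+μ₃²) + σ₂²(σ₄²+μ₄²) + 2σ₁₂(σ₃₄+μ₃μ₄)` and the main effect partial
variances of `x₃` and `x₄` vanish: `Var(E[f|x₃]) = Var(E[f|x₄]) = 0`. -/
theorem dependent_gaussian_model_variances
    {Ω : Type*} [MeasurableSpace Ω] (P : Measure Ω) [IsProbabilityMeasure P]
    (X : Fin 4 → Ω → ℝ) (hX : ∀ i, Measurable (X i))
    (μ3 μ4 σ1 σ2 σ3 σ4 σ12 σ34 : ℝ)
    (m : Fin 4 → ℝ) (hm : m = ![0, 0, μ3, μ4])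
    (C : Matrix (Fin 4) (Fin 4) ℝ)
    (hC : C = !![σ1 ^ 2, σ12, 0, 0; σ12, σ2 ^ 2, 0, 0;
                 0, 0, σ3 ^ 2, σ34; 0, 0, σ34, σ4 ^ 2])
    (hgauss : ∀ c : Fin 4 → ℝ,
      Measure.map (fun ω => ∑ i, c i * X i ω) P
        = gaussianReal (∑ i, c i * m i) (∑ i, ∑ j, c i * c j * C i j).toNNReal)
    (f : Ω → ℝ) (hf : f = fun ω => X 0 ω * X 2 ω + X 1 ω * X 3 ω) :
    variance f P
        = σ1 ^ 2 * (σ3 ^ 2 + μ3 ^ 2) + σ2 ^ 2 * (σ4 ^ 2 + μ4 ^ 2)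
            + 2 * σ12 * (σ34 + μ3 * μ4) ∧
    variance (P[f | MeasurableSpace.comap (X 2) inferInstance]) P = 0 ∧
    variance (P[f | MeasurableSpace.comap (X 3) inferInstance]) P = 0 := by
  have hG : HasGaussianLaw (fun ω => (X · ω)) P :=
    hasGaussianLaw_of_map_sum_eq_gaussianReal hX fun c => ⟨_, _, hgauss c⟩
  have hmean := integral_eq_of_map_sum_eq_gaussianReal hX hgauss
  have hcov : ∀ i j, cov[X i, X j; P] = C i j := by
    refine covariance_eq_of_map_sum_eq_gaussianReal hX ?_ ?_ hgauss
    · subst hC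
      ext i j
      fin_cases i <;> fin_cases j <;> rfl
    · intro i
      subst hC
      fin_cases i <;> simp [sq_nonneg]
  have hL2 (i : Fin 4) : MemLp (X i) 2 P := (hG.eval i).memLp_two
  have hmoment (i j : Fin 4) : ∫ ω, X i ω * X j ω ∂P = C i j + m i * m j := by
    have h := covariance_eq_sub (hL2 i) (hL2 j)
    rw [hcov, hmean, hmean] at h
    simp only [Pi.mul_apply] at h
    linarith
  let U : Fin 2 → Ω → ℝ := fun i => X (Fin.castAdd 2 i)
  let V : Fin 2 → Ω → ℝ := fun i => X (Fin.natAdd 2 i)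
  have hindep : IndepFun (fun ω i => U i ω) (fun ω i => V i ω) P := by
    refine HasGaussianLaw.indepFun_of_covariance_eval (hG.map_fun
      (.prod (.pi fun i : Fin 2 => .proj (Fin.castAdd 2 i))
        (.pi fun i : Fin 2 => .proj (Fin.natAdd 2 i)))) fun i j => ?_
    rw [hcov, hC]
    fin_cases i <;> fin_cases j <;> rfl
  have hUmean (i : Fin 2) : ∫ ω, U i ω ∂P = 0 := by
    rw [hmean, hm]
    fin_cases i <;> rfl
  have hint (i j : Fin 2) : Integrable (U i * V j) P := (hL2 _).integrable_mul (hL2 _)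
  have hcond (k : Fin 2) : P[f | MeasurableSpace.comap (V k) inferInstance] =ᵐ[P] 0 := by
    have hterm (i : Fin 2) :
        P[U i * V i | MeasurableSpace.comap (V k) inferInstance] =ᵐ[P] 0 := by
      have hVZ (l : Fin 2) : Measurable[MeasurableSpace.comap (fun ω i => V i ω) inferInstance]
          (V l) :=
        (measurable_pi_apply l).comp (comap_measurable (fun ω i => V i ω))
      exact condExp_mul_ae_eq_zero_of_indep (hVZ k).comap_le
        (measurable_pi_lambda _ fun i => hX _).comap_le (hX _) ((hL2 _).integrable one_le_two)
        (hVZ i).stronglyMeasurable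
        (hindep.comp (measurable_pi_apply i) measurable_id) (hUmean i) (hint i i)
    have hfUV : f = U 0 * V 0 + U 1 * V 1 := hf
    rw [hfUV]
    filter_upwards [condExp_add (hint 0 0) (hint 1 1) (MeasurableSpace.comap (V k) inferInstance),
      hterm 0, hterm 1] with ω h h₀ h₁
    rw [h, Pi.add_apply, h₀, h₁, Pi.zero_apply, add_zero]
  have hcondvar (k : Fin 2) :
      variance (P[f | MeasurableSpace.comap (V k) inferInstance]) P = 0 := by
    rw [variance_congr (hcond k), variance_zero]
  refine ⟨?_, hcondvar 0, hcondvar 1⟩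
  have hfmean : ∫ ω, f ω ∂P = 0 := by
    rw [← integral_condExp (hX 2).comap_le]
    exact integral_eq_zero_of_ae (hcond 0)
  have hsq := integral_sq_mul_add_mul_of_indepFun (U := U) (V := V)
    (fun _ => hL2 _) (fun _ => hL2 _) hindep
  simp only [U, V, hmoment, hm, hC] at hsq
  rw [variance_of_integral_eq_zero (by rw [hf]; fun_prop) hfmean, hf]
  refine hsq.trans ?_
  simp [Fin.natAdd, Fin.castAdd, Fin.castLE]
  ring
end

section
/- Let f(x) = x_1 + x_2 + x_3 where (x_1,x_2,x_3) is jointly normal with zero mean and covariance matrix [[1,0,0],[0,1,ρσ],[0,ρσ,σ^2]]. Then Var(f) = 2 + σ^2 + 2ρσ, and the main effect Sobol' indices are S_1 = 1/(2+σ^2+2ρσ), S_2 = (1+ρσ)^2/(2+σ^2+2ρσ), S_3 = (ρ+σ)^2/(2+σ^2+2ρσ), while the total indices are S_1^{tot} = 1/(2+σ^2+2ρσ), S_2^{tot} = (1−ρ^2)/(2+σ^2+2ρσ), S_3^{tot} = σ^2(1−ρ^2)/(2+σ^2+2ρσ). -/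
open MeasureTheory ProbabilityTheory

/-- A random vector whose linear combinations are all Gaussian has a Gaussian law. -/
lemma hasGaussianLaw_of_forall_sum_mul {Ω ι : Type*} [MeasurableSpace Ω] [Fintype ι]
    {P : Measure Ω} {X : ι → Ω → ℝ} (hX : ∀ i, Measurable (X i))
    (h : ∀ c : ι → ℝ, ∃ m v, P.map (fun ω => ∑ i, c i * X i ω) = gaussianReal m v) :
    HasGaussianLaw (fun ω i => X i ω) P := by
  classical
  refine ⟨isGaussian_of_map_eq_gaussianReal fun L => ?_⟩
  obtain ⟨m, v, hmv⟩ := h fun i => L (Pi.single i 1)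
  refine ⟨m, v, ?_⟩
  rw [Measure.map_map (by fun_prop) (measurable_pi_lambda _ hX), ← hmv]
  congr 1
  ext ω
  have key := L.toLinearMap.pi_apply_eq_sum_univ fun i => X i ω
  simp only [ContinuousLinearMap.coe_coe, smul_eq_mul] at key
  simp only [Function.comp_apply, key]
  refine Finset.sum_congr rfl fun i _ => ?_
  rw [mul_comm]
  congr 2
  ext j
  simp [Pi.single_apply, eq_comm]

/-- If `R` is centred and independent of `Z`, and `L` is a function of `Z`, then
`E[L + R | Z] = L`. -/
lemma condExp_add_of_indepFun {Ω E : Type*} [MeasurableSpace Ω] [mE : MeasurableSpace E]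
    {P : Measure Ω} [IsProbabilityMeasure P] {Z : Ω → E} {L R : Ω → ℝ} (hZ : Measurable Z)
    (hL : StronglyMeasurable[mE.comap Z] L) (hLi : Integrable L P)
    (hR : Measurable R) (hRi : Integrable R P) (hR0 : ∫ ω, R ω ∂P = 0)
    (hind : IndepFun Z R P) :
    P[fun ω => L ω + R ω | mE.comap Z] =ᵐ[P] L := by
  have hle := hZ.comap_le
  have hcond : P[R | mE.comap Z] =ᵐ[P] fun _ => ∫ ω, R ω ∂P :=
    condExp_indep_eq hR.comap_le hle (comap_measurable R).stronglyMeasurable hind.symm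
  have hadd : P[fun ω => L ω + R ω | mE.comap Z] =ᵐ[P] P[L | mE.comap Z] + P[R | mE.comap Z] :=
    condExp_add hLi hRi _
  filter_upwards [hadd, hcond] with ω h₁ h₂
  rw [h₁, Pi.add_apply, h₂, hR0, add_zero, condExp_of_stronglyMeasurable hle hL hLi]

section CentredGaussian

variable {Ω ι : Type*} [MeasurableSpace Ω] [Fintype ι] {P : Measure Ω}
  {X : ι → Ω → ℝ} {C : Matrix ι ι ℝ}

lemma integral_sum_mul_eq_zero (hX : ∀ i, Measurable (X i))
    (hgauss : ∀ c : ι → ℝ, P.map (fun ω => ∑ i, c i * X i ω)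
      = gaussianReal 0 (∑ i, ∑ j, c i * c j * C i j).toNNReal) (c : ι → ℝ) :
    ∫ ω, ∑ i, c i * X i ω ∂P = 0 := by
  have h := integral_map (μ := P) (φ := fun ω => ∑ i, c i * X i ω) (f := fun x : ℝ => x)
    (by fun_prop) (by fun_prop)
  rw [← h, hgauss, integral_id_gaussianReal]

lemma memLp_two_sum_mul (hX : ∀ i, Measurable (X i))
    (hgauss : ∀ c : ι → ℝ, P.map (fun ω => ∑ i, c i * X i ω)
      = gaussianReal 0 (∑ i, ∑ j, c i * c j * C i j).toNNReal) (c : ι → ℝ) :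
    MemLp (fun ω => ∑ i, c i * X i ω) 2 P := by
  have h : MemLp (fun x : ℝ => x) 2 (P.map fun ω => ∑ i, c i * X i ω) := by
    rw [hgauss]
    exact memLp_id_gaussianReal' 2 (by simp)
  exact h.comp_of_map (by fun_prop)

lemma variance_sum_mul (hX : ∀ i, Measurable (X i))
    (hC : ∀ c : ι → ℝ, 0 ≤ ∑ i, ∑ j, c i * c j * C i j)
    (hgauss : ∀ c : ι → ℝ, P.map (fun ω => ∑ i, c i * X i ω)
      = gaussianReal 0 (∑ i, ∑ j, c i * c j * C i j).toNNReal) (c : ι → ℝ) :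
    variance (fun ω => ∑ i, c i * X i ω) P = ∑ i, ∑ j, c i * c j * C i j := by
  have h := variance_map (μ := P) (Y := fun ω => ∑ i, c i * X i ω) (X := fun x : ℝ => x)
    (by fun_prop) (by fun_prop)
  rw [hgauss, variance_fun_id_gaussianReal, Real.coe_toNNReal _ (hC c)] at h
  exact h.symm

lemma integral_sq_sum_mul (hX : ∀ i, Measurable (X i))
    (hC : ∀ c : ι → ℝ, 0 ≤ ∑ i, ∑ j, c i * c j * C i j)
    (hgauss : ∀ c : ι → ℝ, P.map (fun ω => ∑ i, c i * X i ω)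
      = gaussianReal 0 (∑ i, ∑ j, c i * c j * C i j).toNNReal) (c : ι → ℝ) :
    ∫ ω, (∑ i, c i * X i ω) ^ 2 ∂P = ∑ i, ∑ j, c i * c j * C i j := by
  rw [← variance_sum_mul hX hC hgauss c, variance_of_integral_eq_zero (by fun_prop)
    (integral_sum_mul_eq_zero hX hgauss c)]

lemma covariance_sum_mul_sum_mul [IsProbabilityMeasure P] (hX : ∀ i, Measurable (X i))
    (hC : ∀ c : ι → ℝ, 0 ≤ ∑ i, ∑ j, c i * c j * C i j) (hsymm : C.IsSymm)
    (hgauss : ∀ c : ι → ℝ, P.map (fun ω => ∑ i, c i * X i ω)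
      = gaussianReal 0 (∑ i, ∑ j, c i * c j * C i j).toNNReal) (a c : ι → ℝ) :
    cov[fun ω => ∑ i, a i * X i ω, fun ω => ∑ i, c i * X i ω; P]
      = ∑ i, ∑ j, a i * c j * C i j := by
  have h := variance_fun_add (memLp_two_sum_mul hX hgauss a) (memLp_two_sum_mul hX hgauss c)
  simp_rw [← Finset.sum_add_distrib, ← add_mul] at h
  have hac := variance_sum_mul hX hC hgauss (a + c)
  simp only [Pi.add_apply] at hac
  rw [hac, variance_sum_mul hX hC hgauss, variance_sum_mul hX hC hgauss] at h
  have hswap : ∑ i, ∑ j, c i * a j * C i j = ∑ i, ∑ j, a i * c j * C i j := by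
    rw [Finset.sum_comm]
    refine Finset.sum_congr rfl fun i _ => Finset.sum_congr rfl fun j _ => ?_
    rw [hsymm.apply i j, mul_comm (c j)]
  simp only [add_mul, mul_add, Finset.sum_add_distrib] at h
  linarith

/-- Normal conditioning: let `Z` be a function of the coordinates `X (s k)`. If `∑ a i X i` is a
function of `Z` and `∑ c i X i` is uncorrelated with every `X (s k)`, then the conditional
expectation of `∑ (a i + c i) X i` given `Z` is `∑ a i X i`. -/
lemma condExp_sum_add_mul [IsProbabilityMeasure P] {κ E : Type*} [Finite κ]
    [mE : MeasurableSpace E] (hX : ∀ i, Measurable (X i))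
    (hC : ∀ c : ι → ℝ, 0 ≤ ∑ i, ∑ j, c i * c j * C i j) (hsymm : C.IsSymm)
    (hgauss : ∀ c : ι → ℝ, P.map (fun ω => ∑ i, c i * X i ω)
      = gaussianReal 0 (∑ i, ∑ j, c i * c j * C i j).toNNReal)
    (s : κ → ι) {g : (κ → ℝ) → E} (hg : Measurable g) (a c : ι → ℝ)
    (ha : Measurable[mE.comap fun ω => g fun k => X (s k) ω] fun ω => ∑ i, a i * X i ω)
    (hc : ∀ k, ∑ j, c j * C (s k) j = 0) :
    P[fun ω => (∑ i, a i * X i ω) + ∑ i, c i * X i ω | mE.comap fun ω => g fun k => X (s k) ω]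
      =ᵐ[P] fun ω => ∑ i, a i * X i ω := by
  classical
  have hlaw : HasGaussianLaw (fun ω i => X i ω) P :=
    hasGaussianLaw_of_forall_sum_mul hX fun c => ⟨_, _, hgauss c⟩
  let T : (ι → ℝ) →L[ℝ] (κ → ℝ) × (Unit → ℝ) :=
    (ContinuousLinearMap.pi fun k => .proj (s k)).prod
      (ContinuousLinearMap.pi fun _ => ∑ i, c i • .proj i)
  have : Fintype κ := Fintype.ofFinite κ
  have hpair : HasGaussianLaw
      (fun ω => ((fun k => X (s k) ω), fun _ : Unit => ∑ i, c i * X i ω)) P := by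
    convert! hlaw.map_fun T using 2 with ω
    ext <;> simp [T]
  have hcov : ∀ (k : κ) (_ : Unit), cov[X (s k), fun ω => ∑ i, c i * X i ω; P] = 0 := by
    intro k _
    have h := covariance_sum_mul_sum_mul hX hC hsymm hgauss (Pi.single (s k) 1) c
    simpa [Pi.single_apply, hc k] using h
  have hind : IndepFun (fun ω k => X (s k) ω) (fun ω => ∑ i, c i * X i ω) P :=
    (hpair.indepFun_of_covariance_eval hcov).comp measurable_id (measurable_pi_apply ())
  exact condExp_add_of_indepFun (by fun_prop) ha.stronglyMeasurable
    ((memLp_two_sum_mul hX hgauss a).integrable one_le_two) (by fun_prop)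
    ((memLp_two_sum_mul hX hgauss c).integrable one_le_two)
    (integral_sum_mul_eq_zero hX hgauss c) (hind.comp hg measurable_id)

end CentredGaussian

/-- For the linear model `f(x) = x₁ + x₂ + x₃` with `(x₁,x₂,x₃)` jointly normal of
zero mean and covariance `[[1,0,0],[0,1,ρσ],[0,ρσ,σ²]]`:
`Var(f) = 2 + σ² + 2ρσ`, the main effect Sobol' indices are
`S₁ = 1/(2+σ²+2ρσ)`, `S₂ = (1+ρσ)²/(2+σ²+2ρσ)`, `S₃ = (ρ+σ)²/(2+σ²+2ρσ)`, and the
total indices are `S₁ᵗᵒᵗ = 1/(2+σ²+2ρσ)`, `S₂ᵗᵒᵗ = (1−ρ²)/(2+σ²+2ρσ)`,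
`S₃ᵗᵒᵗ = σ²(1−ρ²)/(2+σ²+2ρσ)`. -/
theorem dependent_gaussian_linear_model_indices
    {Ω : Type*} [MeasurableSpace Ω] (P : Measure Ω) [IsProbabilityMeasure P]
    (X : Fin 3 → Ω → ℝ) (hX : ∀ i, Measurable (X i))
    (ρ σ : ℝ) (hρ : |ρ| ≤ 1) (hσ : 0 < σ) (hD : 0 < 2 + σ ^ 2 + 2 * ρ * σ)
    (C : Matrix (Fin 3) (Fin 3) ℝ)
    (hC : C = !![1, 0, 0; 0, 1, ρ * σ; 0, ρ * σ, σ ^ 2])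
    (hgauss : ∀ c : Fin 3 → ℝ,
      Measure.map (fun ω => ∑ i, c i * X i ω) P
        = gaussianReal 0 (∑ i, ∑ j, c i * c j * C i j).toNNReal)
    (f : Ω → ℝ) (hf : f = fun ω => X 0 ω + X 1 ω + X 2 ω) :
    variance f P = 2 + σ ^ 2 + 2 * ρ * σ ∧
    variance (P[f | MeasurableSpace.comap (X 0) inferInstance]) P / variance f P
      = 1 / (2 + σ ^ 2 + 2 * ρ * σ) ∧
    variance (P[f | MeasurableSpace.comap (X 1) inferInstance]) P / variance f P
      = (1 + ρ * σ) ^ 2 / (2 + σ ^ 2 + 2 * ρ * σ) ∧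
    variance (P[f | MeasurableSpace.comap (X 2) inferInstance]) P / variance f P
      = (ρ + σ) ^ 2 / (2 + σ ^ 2 + 2 * ρ * σ) ∧
    (∫ ω, (f ω - (P[f | MeasurableSpace.comap (fun ω => (X 1 ω, X 2 ω)) inferInstance]) ω) ^ 2 ∂P)
        / variance f P
      = 1 / (2 + σ ^ 2 + 2 * ρ * σ) ∧
    (∫ ω, (f ω - (P[f | MeasurableSpace.comap (fun ω => (X 0 ω, X 2 ω)) inferInstance]) ω) ^ 2 ∂P)
        / variance f P
      = (1 - ρ ^ 2) / (2 + σ ^ 2 + 2 * ρ * σ) ∧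
    (∫ ω, (f ω - (P[f | MeasurableSpace.comap (fun ω => (X 0 ω, X 1 ω)) inferInstance]) ω) ^ 2 ∂P)
        / variance f P
      = σ ^ 2 * (1 - ρ ^ 2) / (2 + σ ^ 2 + 2 * ρ * σ) := by

  have hpsd : ∀ c : Fin 3 → ℝ, 0 ≤ ∑ i, ∑ j, c i * c j * C i j := by
    intro c
    have hρ2 : ρ ^ 2 ≤ 1 := (sq_le_one_iff_abs_le_one ρ).2 hρ
    have hnn := mul_nonneg (sub_nonneg.2 hρ2) (sq_nonneg (σ * c 2))
    simp only [hC, Fin.sum_univ_three, Matrix.of_apply, Matrix.cons_val]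
    nlinarith [sq_nonneg (c 0), sq_nonneg (c 1 + ρ * (σ * c 2))]
  have hsymm : C.IsSymm := by
    rw [hC]
    ext i j
    fin_cases i <;> fin_cases j <;> rfl
  have hσ0 : σ ≠ 0 := hσ.ne'
  have hvar : variance f P = 2 + σ ^ 2 + 2 * ρ * σ := by
    have h := variance_sum_mul hX hpsd hgauss ![1, 1, 1]
    simp only [hC, Fin.sum_univ_three, Matrix.of_apply, Matrix.cons_val, one_mul] at h
    rw [hf, h]
    ring
  have hmain : ∀ (i : Fin 3) (b : ℝ), ∑ k, C i k = b * C i i →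
      variance (P[f | MeasurableSpace.comap (X i) inferInstance]) P = b ^ 2 * C i i := by
    intro i b hb
    have hsum : ∀ ω, ∑ j, (Pi.single i b : Fin 3 → ℝ) j * X j ω = b * X i ω := by
      simp [Pi.single_apply]
    have hfeq : f = fun ω => (∑ j, (Pi.single i b : Fin 3 → ℝ) j * X j ω)
        + ∑ j, (1 - (Pi.single i b : Fin 3 → ℝ) j) * X j ω := by
      ext ω
      rw [hf, ← Finset.sum_add_distrib, Fin.sum_univ_three]
      ring
    have h := condExp_sum_add_mul hX hpsd hsymm hgauss (fun _ : Unit => i)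
      (measurable_pi_apply ()) (Pi.single i b) (fun j => 1 - (Pi.single i b : Fin 3 → ℝ) j)
      (by simpa only [hsum] using (comap_measurable (X i)).const_mul b)
      (fun _ => by simp [sub_mul, Pi.single_apply, hb])
    rw [← hfeq] at h
    rw [variance_congr h, variance_sum_mul hX hpsd hgauss]
    simp [Pi.single_apply, sq]
  have htot : ∀ (i j : Fin 3) (a c : Fin 3 → ℝ), (∀ k, a k + c k = 1) →
      (∀ ω, ∑ k, a k * X k ω = a i * X i ω + a j * X j ω) →
      (∑ k, c k * C i k = 0) → (∑ k, c k * C j k = 0) →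
      ∫ ω, (f ω - (P[f | MeasurableSpace.comap (fun ω => (X i ω, X j ω)) inferInstance]) ω) ^ 2 ∂P
        = ∑ k, ∑ l, c k * c l * C k l := by
    intro i j a c hac ha hi hj
    have hfeq : f = fun ω => (∑ k, a k * X k ω) + ∑ k, c k * X k ω := by
      ext ω
      simp only [← Finset.sum_add_distrib, ← add_mul, hac, one_mul]
      rw [hf, Fin.sum_univ_three]
    have hpair : Measurable[MeasurableSpace.comap (fun ω => (X i ω, X j ω)) inferInstance]
        fun ω => (X i ω, X j ω) := comap_measurable _
    have h := condExp_sum_add_mul hX hpsd hsymm hgauss ![i, j]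
      (g := fun z : Fin 2 → ℝ => (z 0, z 1)) (by fun_prop) a c
      (by
        simp only [ha]
        exact (hpair.fst.const_mul (a i)).add (hpair.snd.const_mul (a j)))
      (by simp [Fin.forall_fin_two, hi, hj])
    rw [← hfeq] at h
    rw [← integral_sq_sum_mul hX hpsd hgauss c]
    refine integral_congr_ae ?_
    filter_upwards [h] with ω hω
    have hω' : (P[f | MeasurableSpace.comap (fun ω => (X i ω, X j ω)) inferInstance]) ω
      = ∑ k, a k * X k ω := hω
    rw [hω', hfeq]
    ring
  refine ⟨hvar, ?_, ?_, ?_, ?_, ?_, ?_⟩ <;> rw [hvar] <;> congr 1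
  · rw [hmain 0 1 (by simp [hC, Fin.sum_univ_three])]
    simp [hC]
  · rw [hmain 1 (1 + ρ * σ) (by simp [hC, Fin.sum_univ_three])]
    simp [hC]
  · rw [hmain 2 (1 + ρ / σ) (by simp [hC, Fin.sum_univ_three]; field_simp; ring)]
    simp only [hC, Matrix.of_apply, Matrix.cons_val]
    field_simp
    ring
  · rw [htot 1 2 ![0, 1, 1] ![1, 0, 0] (by simp [Fin.forall_fin_succ])
      (by simp [Fin.sum_univ_three]) (by simp [hC, Fin.sum_univ_three])
      (by simp [hC, Fin.sum_univ_three])]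
    simp [hC, Fin.sum_univ_three]
  · rw [htot 0 2 ![1, 0, 1 + ρ / σ] ![0, 1, -(ρ / σ)] (by simp [Fin.forall_fin_succ])
      (by simp [Fin.sum_univ_three]) (by simp [hC, Fin.sum_univ_three])
      (by simp [hC, Fin.sum_univ_three]; field_simp; ring)]
    simp only [hC, Fin.sum_univ_three, Matrix.of_apply, Matrix.cons_val]
    field_simp
    ring
  · rw [htot 0 1 ![1, 1 + ρ * σ, 0] ![0, -(ρ * σ), 1] (by simp [Fin.forall_fin_succ])
      (by simp [Fin.sum_univ_three]) (by simp [hC, Fin.sum_univ_three])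
      (by simp [hC, Fin.sum_univ_three])]
    simp only [hC, Fin.sum_univ_three, Matrix.of_apply, Matrix.cons_val]
    ring
end
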